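/- In the MM-SPIR model (with all constraints), let 𝒫1, 𝒫2 be size-P subsets of {1,…,K} with 𝒫1 ≠ 𝒫2 and 𝒫1 ∩ 𝒫2 ≠ ∅; write 𝒫b = 𝒫1 ∖ 𝒫2, let i be any element of 𝒫1 ∩ 𝒫2, and let 𝒫d be any subset of (𝒫1 ∩ 𝒫2) ∖ {i}. Then for every database index n ∈ {1,…,N}: H(W_i | W_{𝒫b}, W_{𝒫d}, A_n^{[𝒫2]}, Q_n^{[𝒫2]}) = H(W_i | W_{𝒫b}, W_{𝒫d}, Q_n^{[𝒫2]}); i.e., the answer of a single database reveals nothing further about the message W_i given the messages indexed by 𝒫b ∪ 𝒫d. -/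

import Mathlib

open Finset

namespace MMSPIR

variable {Ω : Type} [Fintype Ω]

/-- Probability that the random variable `X` takes the value `v`,
under the weight function `p` on the finite sample space `Ω`. -/
noncomputable def prob (p : Ω → ℝ) {V : Type} [DecidableEq V] (X : Ω → V) (v : V) : ℝ :=
  ∑ ω ∈ Finset.univ.filter (fun ω => X ω = v), p ω

/-- Shannon entropy of `X`, with logarithm taken to base `q`. -/
noncomputable def ent (q : ℕ) (p : Ω → ℝ) {V : Type} [Fintype V] [DecidableEq V]
    (X : Ω → V) : ℝ :=
  -∑ v : V, prob p X v * Real.logb q (prob p X v)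

/-- Conditional entropy `H(X | Y)`, base `q`. -/
noncomputable def cent (q : ℕ) (p : Ω → ℝ) {V W : Type} [Fintype V] [DecidableEq V]
    [Fintype W] [DecidableEq W] (X : Ω → V) (Y : Ω → W) : ℝ :=
  ent q p (fun ω => (X ω, Y ω)) - ent q p Y

/-- Mutual information `I(X ; Y)`, base `q`. -/
noncomputable def mi (q : ℕ) (p : Ω → ℝ) {V W : Type} [Fintype V] [DecidableEq V]
    [Fintype W] [DecidableEq W] (X : Ω → V) (Y : Ω → W) : ℝ :=
  ent q p X + ent q p Y - ent q p (fun ω => (X ω, Y ω))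

/-- Conditional mutual information `I(X ; Y | Z)`, base `q`. -/
noncomputable def cmi (q : ℕ) (p : Ω → ℝ) {U V W : Type} [Fintype U] [DecidableEq U]
    [Fintype V] [DecidableEq V] [Fintype W] [DecidableEq W]
    (X : Ω → U) (Y : Ω → V) (Z : Ω → W) : ℝ :=
  cent q p X Z + cent q p Y Z - cent q p (fun ω => (X ω, Y ω)) Z

/-- `X` and `Y` have the same distribution. -/
def IdentDist (p : Ω → ℝ) {V : Type} [DecidableEq V] (X Y : Ω → V) : Prop :=
  ∀ v, prob p X v = prob p Y v

lemma prob_nonneg {p : Ω → ℝ} (hp0 : ∀ ω, 0 ≤ p ω) {V : Type} [DecidableEq V] (X : Ω → V)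
    (v : V) : 0 ≤ prob p X v := Finset.sum_nonneg fun ω _ => hp0 ω

lemma sum_prob_mul (p : Ω → ℝ) {V : Type} [Fintype V] [DecidableEq V] (X : Ω → V) (f : V → ℝ) :
    ∑ v, prob p X v * f v = ∑ ω, p ω * f (X ω) := by
  unfold prob
  rw [← Finset.sum_fiberwise (s := Finset.univ) (g := X) (f := fun ω => p ω * f (X ω))]
  refine Finset.sum_congr rfl fun v _ => ?_
  rw [Finset.sum_mul]
  refine Finset.sum_congr rfl fun ω hω => ?_
  rw [(Finset.mem_filter.mp hω).2]

lemma sum_prob (p : Ω → ℝ) {V : Type} [Fintype V] [DecidableEq V] (X : Ω → V) :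
    ∑ v, prob p X v = ∑ ω, p ω := by
  simpa using sum_prob_mul p X (fun _ => 1)

lemma ent_eq (q : ℕ) (p : Ω → ℝ) {V : Type} [Fintype V] [DecidableEq V] (X : Ω → V) :
    ent q p X = -∑ ω, p ω * Real.logb q (prob p X (X ω)) := by
  unfold ent
  rw [sum_prob_mul p X (fun v => Real.logb q (prob p X v))]

lemma prob_pos {p : Ω → ℝ} (hp0 : ∀ ω, 0 ≤ p ω) {V : Type} [DecidableEq V] (X : Ω → V)
    (ω : Ω) (h : 0 < p ω) : 0 < prob p X (X ω) :=
  lt_of_lt_of_le h (Finset.single_le_sum (f := p) (fun ω _ => hp0 ω) (by simp))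

/-- relabelling -/
lemma ent_congr (q : ℕ) (p : Ω → ℝ) {V V' : Type} [Fintype V] [DecidableEq V]
    [Fintype V'] [DecidableEq V'] (X : Ω → V) (Y : Ω → V')
    (h : ∀ ω ω', X ω = X ω' ↔ Y ω = Y ω') : ent q p X = ent q p Y := by
  simp only [ent_eq, prob, h]

/-- probability of a function of a random variable -/
lemma prob_comp (p : Ω → ℝ) {V V' : Type} [Fintype V] [DecidableEq V] [DecidableEq V']
    (X : Ω → V) (g : V → V') (u : V') :
    prob p (fun ω => g (X ω)) u = ∑ v, prob p X v * (if g v = u then 1 else 0) := by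
  rw [sum_prob_mul p X (fun v => if g v = u then 1 else 0)]
  simp [prob, Finset.sum_filter]

lemma prob_ae (p : Ω → ℝ) {V : Type} [DecidableEq V] (X Y : Ω → V)
    (h : ∀ ω, p ω ≠ 0 → X ω = Y ω) (v : V) : prob p X v = prob p Y v := by
  simp only [prob, Finset.sum_filter]
  refine Finset.sum_congr rfl fun ω _ => ?_
  by_cases h0 : p ω = 0
  · simp [h0]
  · rw [h ω h0]

def Ind (p : Ω → ℝ) {V V' : Type} [DecidableEq V] [DecidableEq V'] (X : Ω → V) (Y : Ω → V') :
    Prop := ∀ v w, prob p (fun ω => (X ω, Y ω)) (v, w) = prob p X v * prob p Y w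

lemma Ind.comp {p : Ω → ℝ} {V V' U U' : Type} [Fintype V] [Fintype V'] [DecidableEq V]
    [DecidableEq V'] [DecidableEq U] [DecidableEq U'] {X : Ω → V} {Y : Ω → V'}
    (h : Ind p X Y) (g : V → U) (k : V' → U') :
    Ind p (fun ω => g (X ω)) (fun ω => k (Y ω)) := by
  intro u u'
  rw [prob_comp p X g, prob_comp p Y k,
    prob_comp p (fun ω => (X ω, Y ω)) (fun z => (g z.1, k z.2)), Fintype.sum_prod_type,
    Finset.sum_mul_sum]
  refine Finset.sum_congr rfl fun v _ => Finset.sum_congr rfl fun w _ => ?_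
  rw [h v w]
  by_cases h1 : g v = u <;> by_cases h2 : k w = u' <;> simp [h1, h2]

lemma Ind.congr_ae {p : Ω → ℝ} {V V' : Type} [DecidableEq V] [DecidableEq V'] {X : Ω → V}
    {Y Y' : Ω → V'} (h : Ind p X Y) (hY : ∀ ω, p ω ≠ 0 → Y ω = Y' ω) : Ind p X Y' := by
  intro v w
  rw [← prob_ae p Y Y' hY, ← h v w]
  exact (prob_ae p _ _ (fun ω hω => by rw [hY ω hω]) _).symm

lemma Ind.ent {q : ℕ} {p : Ω → ℝ} (hp0 : ∀ ω, 0 ≤ p ω) {V V' : Type} [Fintype V] [Fintype V']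
    [DecidableEq V] [DecidableEq V'] {X : Ω → V} {Y : Ω → V'} (h : Ind p X Y) :
    ent q p (fun ω => (X ω, Y ω)) = ent q p X + ent q p Y := by
  rw [ent_eq, ent_eq, ent_eq, ← neg_add, ← Finset.sum_add_distrib]
  congr 1
  refine Finset.sum_congr rfl fun ω _ => ?_
  rcases (hp0 ω).eq_or_lt with h0 | h0
  · simp [← h0]
  · rw [h, Real.logb_mul (prob_pos hp0 X ω h0).ne' (prob_pos hp0 Y ω h0).ne', mul_add]

lemma ind_of_mi {q : ℕ} (hq : 1 < q) {p : Ω → ℝ} (hp0 : ∀ ω, 0 ≤ p ω) (hp1 : ∑ ω, p ω = 1)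
    {V V' : Type} [Fintype V] [Fintype V']
    [DecidableEq V] [DecidableEq V'] {X : Ω → V} {Y : Ω → V'} (h : mi q p X Y = 0) :
    Ind p X Y := by
  have hlq : 0 < Real.log q := Real.log_pos (by exact_mod_cast hq)
  set Z : Ω → V × V' := fun ω => (X ω, Y ω) with hZ
  have key : ∑ ω, p ω * (Real.log (prob p Z (Z ω)) - Real.log (prob p X (X ω))
      - Real.log (prob p Y (Y ω))) = 0 := by
    have h2 : mi q p X Y = (∑ ω, p ω * (Real.log (prob p Z (Z ω)) - Real.log (prob p X (X ω))
      - Real.log (prob p Y (Y ω)))) / Real.log q := by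
      unfold mi
      rw [ent_eq, ent_eq, ent_eq, Finset.sum_div]
      simp only [← Finset.sum_neg_distrib, ← Finset.sum_add_distrib, ← Finset.sum_sub_distrib]
      refine Finset.sum_congr rfl fun ω _ => ?_
      simp only [Real.logb]
      ring
    rw [h] at h2
    field_simp at h2
    linarith
  have key2 : ∑ z : V × V', prob p Z z * (Real.log (prob p Z z) - Real.log (prob p X z.1)
      - Real.log (prob p Y z.2)) = 0 := by
    rw [sum_prob_mul p Z (fun z => (Real.log (prob p Z z) - Real.log (prob p X z.1)
      - Real.log (prob p Y z.2)))]
    exact key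
  have mX : ∀ v w, prob p Z (v, w) ≤ prob p X v := fun v w =>
    Finset.sum_le_sum_of_subset_of_nonneg (by intro ω; simp +contextual [hZ])
      (fun ω _ _ => hp0 ω)
  have mY : ∀ v w, prob p Z (v, w) ≤ prob p Y w := fun v w =>
    Finset.sum_le_sum_of_subset_of_nonneg (by intro ω; simp +contextual [hZ])
      (fun ω _ _ => hp0 ω)
  have term : ∀ z : V × V', prob p Z z * (Real.log (prob p Z z) - Real.log (prob p X z.1)
      - Real.log (prob p Y z.2)) + prob p X z.1 * prob p Y z.2 - prob p Z z
      = prob p X z.1 * prob p Y z.2 *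
        InformationTheory.klFun (prob p Z z / (prob p X z.1 * prob p Y z.2)) := by
    rintro ⟨v, w⟩
    have a := mX v w
    have b := mY v w
    have c := prob_nonneg hp0 Z (v, w)
    rcases c.eq_or_lt with c0 | c0
    · simp [← c0, InformationTheory.klFun]
    · have a0 := c0.trans_le a
      have b0 := c0.trans_le b
      simp only [InformationTheory.klFun]
      rw [Real.log_div c0.ne' (by positivity), Real.log_mul a0.ne' b0.ne']
      field_simp
      ring
  have tn : ∀ z : V × V', 0 ≤ prob p X z.1 * prob p Y z.2 *
        InformationTheory.klFun (prob p Z z / (prob p X z.1 * prob p Y z.2)) := fun z =>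
    have hh := mul_nonneg (prob_nonneg hp0 X z.1) (prob_nonneg hp0 Y z.2)
    mul_nonneg hh
      (InformationTheory.klFun_nonneg (div_nonneg (prob_nonneg hp0 _ _) hh))
  have s0 : ∑ z : V × V', prob p X z.1 * prob p Y z.2 *
        InformationTheory.klFun (prob p Z z / (prob p X z.1 * prob p Y z.2)) = 0 := by
    simp only [← term]
    rw [Finset.sum_sub_distrib, Finset.sum_add_distrib, key2, sum_prob, Fintype.sum_prod_type]
    simp only [← Finset.sum_mul_sum, sum_prob, hp1]
    simp
  have z0 := (Finset.sum_eq_zero_iff_of_nonneg (fun z _ => tn z)).mp s0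
  intro v w
  have z1 := z0 (v, w) (Finset.mem_univ _)
  change prob p Z (v, w) = _
  rcases (prob_nonneg hp0 X v).eq_or_lt with a0 | a0
  · have a := mX v w
    have c := prob_nonneg hp0 Z (v, w)
    rw [← a0] at a ⊢
    simp only [zero_mul]
    linarith
  rcases (prob_nonneg hp0 Y w).eq_or_lt with b0 | b0
  · have a := mY v w
    have c := prob_nonneg hp0 Z (v, w)
    rw [← b0] at a ⊢
    simp only [mul_zero]
    linarith
  have ab := mul_pos a0 b0
  have z2 := (mul_eq_zero.mp z1).resolve_left ab.ne'
  rw [InformationTheory.klFun_eq_zero_iff (div_nonneg (prob_nonneg hp0 _ _) ab.le)] at z2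
  exact (div_eq_one_iff_eq ab.ne').mp z2

lemma fun_of_cent {q : ℕ} (hq : 1 < q) {p : Ω → ℝ} (hp0 : ∀ ω, 0 ≤ p ω) (hp1 : ∑ ω, p ω = 1)
    {V V' : Type} [Fintype V] [Fintype V']
    [DecidableEq V] [DecidableEq V'] {X : Ω → V} {Y : Ω → V'} (h : cent q p X Y = 0) :
    ∃ g : V' → V, ∀ ω, p ω ≠ 0 → X ω = g (Y ω) := by
  classical
  have hq' : (1 : ℝ) < q := by exact_mod_cast hq
  have le : ∀ ω, prob p (fun ω => (X ω, Y ω)) (X ω, Y ω) ≤ prob p Y (Y ω) := fun ω =>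
    Finset.sum_le_sum_of_subset_of_nonneg (by intro ω; simp +contextual)
      (fun ω _ _ => hp0 ω)
  have s0 : ∑ ω, p ω * (Real.logb q (prob p Y (Y ω)) -
      Real.logb q (prob p (fun ω => (X ω, Y ω)) (X ω, Y ω))) = 0 := by
    rw [← h]
    unfold cent
    rw [ent_eq, ent_eq]
    simp only [mul_sub, Finset.sum_sub_distrib]
    ring
  have z0 := (Finset.sum_eq_zero_iff_of_nonneg (fun ω _ => by
    rcases (hp0 ω).eq_or_lt with h0 | h0
    · simp [← h0]
    · exact mul_nonneg h0.le (sub_nonneg.mpr (Real.logb_le_logb_of_le hq'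
        (prob_pos hp0 (fun ω => (X ω, Y ω)) ω h0) (le ω))))).mp s0
  have det : ∀ ω ω', p ω ≠ 0 → p ω' ≠ 0 → Y ω = Y ω' → X ω = X ω' := by
    intro ω ω' h1 h2 hY
    by_contra hX
    have z1 := (mul_eq_zero.mp (z0 ω (Finset.mem_univ _))).resolve_left h1
    have hpos := (hp0 ω).lt_of_ne' h1
    have lt : prob p (fun ω => (X ω, Y ω)) (X ω, Y ω) < prob p Y (Y ω) := by
      refine Finset.sum_lt_sum_of_subset (i := ω') (by intro ω; simp +contextual)
        (by simp [hY]) (by simp [Ne.symm hX]) ((hp0 ω').lt_of_ne' h2) (fun ω _ _ => hp0 ω)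
    have := Real.logb_lt_logb hq' (prob_pos hp0 (fun ω => (X ω, Y ω)) ω hpos) lt
    linarith
  have hΩ : Nonempty Ω := by
    by_contra hne
    rw [not_nonempty_iff] at hne
    simp at hp1
  refine ⟨fun y => if hy : ∃ ω, p ω ≠ 0 ∧ Y ω = y then X hy.choose else X hΩ.some,
    fun ω hω => ?_⟩
  have hy : ∃ ω', p ω' ≠ 0 ∧ Y ω' = Y ω := ⟨ω, hω, rfl⟩
  beta_reduce
  rw [dif_pos hy]
  exact det _ _ hω hy.choose_spec.1 hy.choose_spec.2.symm

lemma identDist_comp {p : Ω → ℝ} {V V' : Type} [Fintype V] [DecidableEq V] [DecidableEq V']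
    {X Y : Ω → V} (h : IdentDist p X Y) (g : V → V') :
    IdentDist p (fun ω => g (X ω)) (fun ω => g (Y ω)) := by
  intro u
  rw [prob_comp p X g, prob_comp p Y g]
  simp only [h _]

/-- if `X` is independent of `Z` and `B` of `(X, Z)`, then conditioning on `(B, Z)` is void -/
lemma cent_of_ind {q : ℕ} {p : Ω → ℝ} (hp0 : ∀ ω, 0 ≤ p ω) {V V' U : Type} [Fintype V]
    [Fintype V'] [Fintype U] [DecidableEq V] [DecidableEq V'] [DecidableEq U]
    {X : Ω → V} {Z : Ω → V'} {B : Ω → U}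
    (h1 : Ind p X Z) (h2 : Ind p B (fun ω => (X ω, Z ω))) :
    cent q p X (fun ω => (B ω, Z ω)) = ent q p X := by
  have h3 : Ind p B Z := h2.comp id Prod.snd
  unfold cent
  rw [h3.ent hp0, ent_congr q p (fun ω => (X ω, B ω, Z ω)) (fun ω => (B ω, X ω, Z ω)) (by
    intro ω ω'; simp only [Prod.mk.injEq]; tauto), h2.ent hp0, h1.ent hp0]
  ring

theorem no_leakage_of_common_message
    {Ω MT QT AT FT ST : Type}
    [Fintype Ω] [Fintype MT] [DecidableEq MT] [Fintype QT] [DecidableEq QT]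
    [Fintype AT] [DecidableEq AT] [Fintype FT] [DecidableEq FT]
    [Fintype ST] [DecidableEq ST]
    (N K P L q : ℕ) (hN : 2 ≤ N) (hK : 2 ≤ K) (hP1 : 1 ≤ P) (hP2 : P ≤ K - 1)
    (hL : 1 ≤ L) (hq : IsPrimePow q)
    (p : Ω → ℝ) (hp0 : ∀ ω, 0 ≤ p ω) (hp1 : (∑ ω, p ω) = 1)
    (W : Fin K → Ω → MT) (F : Ω → FT) (S : Ω → ST)
    (Q : Finset (Fin K) → Fin N → Ω → QT)
    (A : Finset (Fin K) → Fin N → Ω → AT)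
    (hWk : ∀ k, ent q p (W k) = (L : ℝ))
    (hWall : ent q p (fun ω (k : Fin K) => W k ω) = (K : ℝ) * L)
    (hind : ent q p (fun ω => (F ω, S ω, fun k : Fin K => W k ω)) =
      ent q p F + ent q p S + ent q p (fun ω (k : Fin K) => W k ω))
    (hQdet : ∀ 𝒫₀ : Finset (Fin K), 𝒫₀.card = P →
      cent q p (fun ω (n : Fin N) => Q 𝒫₀ n ω) F = 0)
    (hAdet : ∀ 𝒫₀ : Finset (Fin K), 𝒫₀.card = P → ∀ n : Fin N,
      cent q p (A 𝒫₀ n) (fun ω => (Q 𝒫₀ n ω, (fun k : Fin K => W k ω), S ω)) = 0)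
    (hrel : ∀ 𝒫₀ : Finset (Fin K), 𝒫₀.card = P →
      cent q p (fun ω (k : {x : Fin K // x ∈ 𝒫₀}) => W k.1 ω)
        (fun ω => ((fun n : Fin N => A 𝒫₀ n ω), F ω)) = 0)
    (hupriv : ∀ (n : Fin N) (𝒫₁ 𝒫₂ : Finset (Fin K)), 𝒫₁.card = P → 𝒫₂.card = P →
      IdentDist p
        (fun ω => (Q 𝒫₁ n ω, A 𝒫₁ n ω, (fun k : Fin K => W k ω), S ω))
        (fun ω => (Q 𝒫₂ n ω, A 𝒫₂ n ω, (fun k : Fin K => W k ω), S ω)))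
    (hdpriv : ∀ 𝒫₀ : Finset (Fin K), 𝒫₀.card = P →
      mi q p (fun ω (k : {x : Fin K // x ∈ 𝒫₀ᶜ}) => W k.1 ω)
        (fun ω => ((fun n : Fin N => Q 𝒫₀ n ω), (fun n : Fin N => A 𝒫₀ n ω), F ω)) = 0)
    : ∀ (𝒫₁ 𝒫₂ : Finset (Fin K)), 𝒫₁.card = P → 𝒫₂.card = P → 𝒫₁ ≠ 𝒫₂ →
      𝒫₁ ∩ 𝒫₂ ≠ ∅ →
      ∀ i ∈ 𝒫₁ ∩ 𝒫₂, ∀ 𝒫d ⊆ (𝒫₁ ∩ 𝒫₂).erase i, ∀ n : Fin N,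
      cent q p (W i)
        (fun ω => ((fun k : {x : Fin K // x ∈ 𝒫₁ \ 𝒫₂} => W k.1 ω),
                   (fun k : {x : Fin K // x ∈ 𝒫d} => W k.1 ω),
                   A 𝒫₂ n ω, Q 𝒫₂ n ω)) =
      cent q p (W i)
        (fun ω => ((fun k : {x : Fin K // x ∈ 𝒫₁ \ 𝒫₂} => W k.1 ω),
                   (fun k : {x : Fin K // x ∈ 𝒫d} => W k.1 ω),
                   Q 𝒫₂ n ω)) := by
  intro P₁ P₂ h1 h2 hne _ i hi D hD n
  have hq1 : 1 < q := hq.one_lt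
  -- for a size-`P` set, the undesired messages are independent of
  -- the desired ones together with a query and an answer
  have base : ∀ T : Finset (Fin K), T.card = P →
      Ind p (fun ω (k : {x : Fin K // x ∈ Tᶜ}) => W k.1 ω)
        (fun ω => ((fun k : {x : Fin K // x ∈ T} => W k.1 ω), A T n ω, Q T n ω)) := by
    intro T hT
    obtain ⟨g, hg⟩ := fun_of_cent hq1 hp0 hp1 (hrel T hT)
    have h0 := ind_of_mi hq1 hp0 hp1 (hdpriv T hT)
    refine (h0.comp id (fun y => (g (y.2.1, y.2.2), y.2.1 n, y.1 n))).congr_ae ?_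
    intro ω hω
    simp only [← hg ω hω]
  obtain ⟨hi1, hi2⟩ := Finset.mem_inter.mp hi
  have hD2 : ∀ x ∈ D, x ∈ P₂ ∧ x ≠ i := fun x hx => by
    have := hD hx
    simp only [Finset.mem_erase, Finset.mem_inter] at this
    exact ⟨this.2.2, this.1⟩
  obtain ⟨j, hj1, hj2⟩ : ∃ j ∈ P₁, j ∉ P₂ := by
    by_contra hcon
    push Not at hcon
    exact hne (Finset.eq_of_subset_of_card_le hcon (by omega))
  have hji : j ≠ i := fun h => hj2 (h ▸ hi2)
  have hT3 : (insert j (P₂.erase i)).card = P := by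
    rw [Finset.card_insert_of_notMem (by simp [hj2]), Finset.card_erase_of_mem hi2]
    omega
  have indB : Ind p (fun ω (k : {x : Fin K // x ∈ P₁ \ P₂}) => W k.1 ω)
      (fun ω => (W i ω, (fun k : {x : Fin K // x ∈ D} => W k.1 ω), A P₂ n ω, Q P₂ n ω)) :=
    (base P₂ h2).comp
      (fun f (k : {x : Fin K // x ∈ P₁ \ P₂}) =>
        f ⟨k.1, Finset.mem_compl.mpr (Finset.mem_sdiff.mp k.2).2⟩)
      (fun z => (z.1 ⟨i, hi2⟩, (fun k : {x : Fin K // x ∈ D} => z.1 ⟨k.1, (hD2 k.1 k.2).1⟩),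
        z.2.1, z.2.2))
  set T := insert j (P₂.erase i) with hT
  have hiT : i ∈ Tᶜ := by simp [hT, hji.symm]
  have hDT : ∀ x ∈ D, x ∈ T := fun x hx => by
    simp [hT, hD2 x hx]
  have ind3 : Ind p (W i)
      (fun ω => ((fun k : {x : Fin K // x ∈ D} => W k.1 ω), A T n ω, Q T n ω)) :=
    (base T hT3).comp (fun f => f ⟨i, hiT⟩)
      (fun z => ((fun k : {x : Fin K // x ∈ D} => z.1 ⟨k.1, hDT k.1 k.2⟩), z.2.1, z.2.2))
  have indI : Ind p (W i)
      (fun ω => ((fun k : {x : Fin K // x ∈ D} => W k.1 ω), A P₂ n ω, Q P₂ n ω)) := by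
    intro v w
    have e1 := identDist_comp (hupriv n T P₂ hT3 h2)
      (fun z => (z.2.2.1 i, (fun k : {x : Fin K // x ∈ D} => z.2.2.1 k.1), z.2.1, z.1)) (v, w)
    have e2 := identDist_comp (hupriv n T P₂ hT3 h2)
      (fun z => ((fun k : {x : Fin K // x ∈ D} => z.2.2.1 k.1), z.2.1, z.1)) w
    have e3 := ind3 v w
    exact e1.symm.trans (e3.trans (congrArg _ e2))
  rw [cent_of_ind hp0 indI indB]
  exact (cent_of_ind hp0 (indI.comp id (fun z => (z.1, z.2.2)))
    (indB.comp id (fun z => (z.1, z.2.1, z.2.2.2)))).symm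

end MMSPIR
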